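/- Scaling vector field commutation with a bilinear operator of homogeneous symbol: if Q is a bilinear operator with symbol q(ξ,η) homogeneous of degree c (i.e., q(λξ,λη) = λᶜ q(ξ,η) for λ > 0), and S₀ = x·∇ is the spatial scaling field, then S₀ Q(h₁,h₂) = Q(S₀h₁, h₂) + Q(h₁, S₀h₂) − c·Q(h₁,h₂) for Schwartz functions h₁, h₂. -/

import Mathlib

open MeasureTheory

/-- Fourier transform on ℝ² with the convention `f̂(ξ) = ∫ e^{−i x·ξ} f(x) dx`. -/
noncomputable def ft2 (f : ℝ × ℝ → ℂ) (ξ : ℝ × ℝ) : ℂ :=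
  ∫ x : ℝ × ℝ, Complex.exp (-Complex.I * (x.1 * ξ.1 + x.2 * ξ.2)) * f x

/-- The bilinear operator with symbol `q`, defined by
`F[Q(h₁,h₂)](ξ) = ∫ q(ξ,η) ĥ₁(ξ−η) ĥ₂(η) dη`. -/
noncomputable def Qop (q : ℝ × ℝ → ℝ × ℝ → ℂ) (h₁ h₂ : ℝ × ℝ → ℂ) (x : ℝ × ℝ) : ℂ :=
  (((2 * Real.pi) ^ 2 : ℝ) : ℂ)⁻¹ *
    ∫ ξ : ℝ × ℝ, Complex.exp (Complex.I * (x.1 * ξ.1 + x.2 * ξ.2)) *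
      ∫ η : ℝ × ℝ, q ξ η * ft2 h₁ (ξ - η) * ft2 h₂ η

/-- The spatial scaling vector field `S₀ = x·∇`. -/
noncomputable def S0 (f : ℝ × ℝ → ℂ) (x : ℝ × ℝ) : ℂ :=
  (x.1 : ℂ) * fderiv ℝ f x (1, 0) + (x.2 : ℂ) * fderiv ℝ f x (0, 1)

open Module

/-- rapid decay -/
def Dec {E : Type*} [NormedAddCommGroup E] (F : E → ℂ) : Prop :=
  ∀ N : ℕ, ∃ K : ℝ, ∀ p, ‖F p‖ * (1 + ‖p‖) ^ N ≤ K

section gen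
variable {E : Type*} [NormedAddCommGroup E] [NormedSpace ℝ E] [FiniteDimensional ℝ E]
  [MeasurableSpace E] [BorelSpace E]

theorem integrable_bd (μ : Measure E) [μ.IsAddHaarMeasure] (K : ℝ) :
    Integrable (fun p : E => K * ((1 + ‖p‖) ^ (finrank ℝ E + 1))⁻¹) μ := by
  have h := integrable_one_add_norm (E := E) (μ := μ) (r := ((finrank ℝ E + 1 : ℕ) : ℝ))
    (by push_cast; linarith)
  refine (h.const_mul K).congr (Filter.Eventually.of_forall fun p => ?_)
  have : 0 ≤ 1 + ‖p‖ := by positivity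
  simp only [Real.rpow_neg this, Real.rpow_natCast]

theorem bd_aux {E : Type*} [NormedAddCommGroup E] [NormedSpace ℝ E] {m Ψ : E → ℂ} {M : ℝ} {c : ℕ}
    (hM : ∀ p, ‖m p‖ ≤ M * (1 + ‖p‖) ^ c) (hΨ : Dec Ψ) (d : ℕ) :
    ∃ K : ℝ, 0 ≤ K ∧ ∀ s : ℝ, 1 / 2 < s → ∀ p, ‖m p * Ψ (s • p)‖ ≤ K * ((1 + ‖p‖) ^ d)⁻¹ := by
  obtain ⟨K, hK⟩ := hΨ (c + d)
  have hM0 : 0 ≤ M := by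
    have := (norm_nonneg _).trans (hM 0)
    simpa using this
  have hK0 : 0 ≤ K := le_trans (by positivity) (hK 0)
  refine ⟨M * (K * 2 ^ (c + d)), by positivity, fun s hs p => ?_⟩
  have h1 : 1 + ‖p‖ ≤ 2 * (1 + ‖s • p‖) := by
    rw [norm_smul, Real.norm_of_nonneg (by linarith)]
    nlinarith [norm_nonneg p]
  have h2 : ‖Ψ (s • p)‖ * (1 + ‖p‖) ^ (c + d) ≤ K * 2 ^ (c + d) := by
    calc ‖Ψ (s • p)‖ * (1 + ‖p‖) ^ (c + d) ≤ ‖Ψ (s • p)‖ * (2 * (1 + ‖s • p‖)) ^ (c + d) := by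
          gcongr
      _ = (‖Ψ (s • p)‖ * (1 + ‖s • p‖) ^ (c + d)) * 2 ^ (c + d) := by rw [mul_pow]; ring
      _ ≤ _ := by gcongr; exact hK _
  rw [← div_eq_mul_inv, le_div_iff₀ (by positivity), norm_mul]
  calc ‖m p‖ * ‖Ψ (s • p)‖ * (1 + ‖p‖) ^ d
      ≤ M * (1 + ‖p‖) ^ c * ‖Ψ (s • p)‖ * (1 + ‖p‖) ^ d := by gcongr; exact hM p
    _ = M * (‖Ψ (s • p)‖ * (1 + ‖p‖) ^ (c + d)) := by rw [pow_add]; ring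
    _ ≤ _ := by gcongr

theorem int_aux (μ : Measure E) [μ.IsAddHaarMeasure] {m Ψ : E → ℂ} {M : ℝ} {c : ℕ}
    (hmc : Continuous m) (hM : ∀ p, ‖m p‖ ≤ M * (1 + ‖p‖) ^ c)
    (hΨc : Continuous Ψ) (hΨ : Dec Ψ) : Integrable (fun p => m p * Ψ p) μ := by
  obtain ⟨K, -, hK⟩ := bd_aux hM hΨ (finrank ℝ E + 1)
  refine (integrable_bd μ K).mono' (by fun_prop) (Filter.Eventually.of_forall fun p => ?_)
  simpa using hK 1 (by norm_num) p

theorem scal (μ : Measure E) [μ.IsAddHaarMeasure] {m Ψ Φ : E → ℂ} {M : ℝ} {c : ℕ}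
    (hmc : Continuous m) (hM : ∀ p, ‖m p‖ ≤ M * (1 + ‖p‖) ^ c)
    (hΨc : Continuous Ψ) (hΨ : Dec Ψ) (hΦc : Continuous Φ) (hΦ : Dec Φ)
    (hd : ∀ p, ∀ s : ℝ, 0 < s → HasDerivAt (fun s : ℝ => Ψ (s • p)) ((s : ℂ)⁻¹ * Φ (s • p)) s) :
    HasDerivAt (fun s : ℝ => ∫ p, m p * Ψ (s • p) ∂μ) (∫ p, m p * Φ p ∂μ) 1 := by
  obtain ⟨K, hK0, hK⟩ := bd_aux hM hΦ (finrank ℝ E + 1)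
  have := (hasDerivAt_integral_of_dominated_loc_of_deriv_le (μ := μ) (x₀ := (1 : ℝ))
    (s := Set.Ioi (1 / 2)) (F := fun s p => m p * Ψ (s • p))
    (F' := fun s p => m p * ((s : ℂ)⁻¹ * Φ (s • p)))
    (bound := fun p => (2 * K) * ((1 + ‖p‖) ^ (finrank ℝ E + 1))⁻¹)
    (Ioi_mem_nhds (by norm_num)) (Filter.Eventually.of_forall fun s => by fun_prop)
    (by simpa using int_aux μ hmc hM hΨc hΨ) (by fun_prop)
    (Filter.Eventually.of_forall fun p s hs => ?_) (integrable_bd μ _)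
    (Filter.Eventually.of_forall fun p s hs => (hd p s ?_).const_mul _)).2
  · simpa using this
  · have hs' : 1 / 2 < s := hs
    have h0 : 0 < s := by linarith
    have h1 := hK s hs' p
    have h2 : s⁻¹ ≤ 2 := by
      rw [inv_le_comm₀ h0 (by norm_num)]; linarith
    calc ‖m p * ((s : ℂ)⁻¹ * Φ (s • p))‖ = s⁻¹ * ‖m p * Φ (s • p)‖ := by
          simp only [norm_mul, norm_inv, Complex.norm_real, Real.norm_of_nonneg h0.le]; ring
      _ ≤ 2 * (K * ((1 + ‖p‖) ^ (finrank ℝ E + 1))⁻¹) := by gcongr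
      _ = _ := by ring
  · have hs' : 1 / 2 < s := hs
    linarith
end gen

section schw
variable {E : Type*} [NormedAddCommGroup E] [NormedSpace ℝ E]

theorem dec_S (f : SchwartzMap E ℂ) : Dec f := by
  intro N
  refine ⟨2 ^ N * ((Finset.Iic (N, 0)).sup fun m => SchwartzMap.seminorm ℝ m.1 m.2) f,
    fun p => ?_⟩
  have := SchwartzMap.one_add_le_sup_seminorm_apply (𝕜 := ℝ) (m := (N, 0)) le_rfl le_rfl f p
  rw [norm_iteratedFDeriv_zero, mul_comm] at this
  exact this

theorem dec_ES (f : SchwartzMap E ℂ) : Dec (fun p => fderiv ℝ f p p) := by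
  intro N
  refine ⟨2 ^ (N + 1) * ((Finset.Iic (N + 1, 1)).sup fun m => SchwartzMap.seminorm ℝ m.1 m.2) f,
    fun p => ?_⟩
  have := SchwartzMap.one_add_le_sup_seminorm_apply (𝕜 := ℝ) (m := (N + 1, 1)) le_rfl le_rfl f p
  rw [norm_iteratedFDeriv_one] at this
  refine le_trans ?_ this
  calc ‖fderiv ℝ f p p‖ * (1 + ‖p‖) ^ N ≤ (‖fderiv ℝ f p‖ * (1 + ‖p‖)) * (1 + ‖p‖) ^ N := by
        gcongr
        refine ((fderiv ℝ f p).le_opNorm p).trans ?_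
        gcongr
        linarith
    _ = _ := by ring

theorem cont_ES (f : SchwartzMap E ℂ) : Continuous (fun p => fderiv ℝ f p p) := by
  have := (f.smooth 1).continuous_fderiv (by norm_num)
  fun_prop

theorem deriv_S (f : SchwartzMap E ℂ) (p : E) (s : ℝ) (hs : 0 < s) :
    HasDerivAt (fun s : ℝ => f (s • p)) ((s : ℂ)⁻¹ * fderiv ℝ f (s • p) (s • p)) s := by
  have h1 : HasDerivAt (fun s : ℝ => s • p) p s := by
    simpa using (hasDerivAt_id s).smul_const p
  have h2 := (f.differentiableAt (x := s • p)).hasFDerivAt.comp_hasDerivAt s h1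
  refine h2.congr_deriv ?_
  have : (s : ℂ) ≠ 0 := by exact_mod_cast hs.ne'
  rw [map_smul, Complex.real_smul]
  field_simp
end schw

theorem ft2_schwartz (h : SchwartzMap (ℝ × ℝ) ℂ) :
    ∃ f : SchwartzMap (ℝ × ℝ) ℂ, ∀ ξ, ft2 h ξ = f ξ := by
  let e := WithLp.prodContinuousLinearEquiv 2 ℝ ℝ ℝ
  let h' : SchwartzMap (WithLp 2 (ℝ × ℝ)) ℂ := SchwartzMap.compCLMOfContinuousLinearEquiv ℂ e h
  let sc : (ℝ × ℝ) ≃L[ℝ] (ℝ × ℝ) := ContinuousLinearEquiv.smulLeft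
    (Units.mk0 ((2 * Real.pi)⁻¹ : ℝ) (by positivity))
  refine ⟨SchwartzMap.compCLMOfContinuousLinearEquiv ℂ (sc.trans e.symm)
    (FourierTransform.fourier h'), fun ξ => ?_⟩
  rw [SchwartzMap.compCLMOfContinuousLinearEquiv_apply, Function.comp_apply, SchwartzMap.fourier_coe,
    Real.fourier_eq', ft2, ← (WithLp.volume_preserving_ofLp ℝ ℝ).integral_comp
      (MeasurableEquiv.toLp 2 (ℝ × ℝ)).symm.measurableEmbedding]
  refine integral_congr_ae (Filter.Eventually.of_forall fun v => ?_)
  have hpi : (Real.pi : ℂ) ≠ 0 := by exact_mod_cast Real.pi_ne_zero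
  have h1 : ((sc.trans e.symm) ξ) = WithLp.toLp 2 ((2 * Real.pi)⁻¹ • ξ) := rfl
  have h2 : h' v = h v.ofLp := rfl
  simp only [h1, h2, smul_eq_mul]
  congr 2
  simp only [WithLp.prod_inner_apply]
  simp
  field_simp

theorem S0_eq {f : ℝ × ℝ → ℂ} (x : ℝ × ℝ) : S0 f x = fderiv ℝ f x x := by
  have : x = x.1 • ((1 : ℝ), (0 : ℝ)) + x.2 • ((0 : ℝ), (1 : ℝ)) := by ext <;> simp
  conv_rhs => rw [this, map_add, map_smul, map_smul, ← this]
  simp [S0]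

theorem ft2_S0 (h f : SchwartzMap (ℝ × ℝ) ℂ) (hf : ∀ ξ, ft2 h ξ = f ξ) (ξ : ℝ × ℝ) :
    ft2 (S0 h) ξ = - fderiv ℝ f ξ ξ - 2 * f ξ := by
  let m : ℝ × ℝ → ℂ := fun x => Complex.exp (-Complex.I * (x.1 * ξ.1 + x.2 * ξ.2))
  have hmc : Continuous m := by fun_prop
  have hM : ∀ p, ‖m p‖ ≤ 1 * (1 + ‖p‖) ^ 0 := fun p => by
    simp [m, Complex.norm_exp]
  have h1 := scal volume hmc hM h.continuous (dec_S h) (cont_ES h) (dec_ES h) (deriv_S h)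
  have h2 : ∀ s : ℝ, 0 < s → f (s • ξ) = ∫ p, m (s • p) * h p := fun s hs => by
    rw [← hf, ft2]
    congr 1; ext p
    simp only [m]
    congr 2
    simp; ring
  have h3 : ∀ s : ℝ, 0 < s → ∫ p, m p * h (s • p) = ((s : ℂ)^2)⁻¹ * f (s⁻¹ • ξ) := fun s hs => by
    rw [h2 _ (by positivity)]
    have := Measure.integral_comp_smul_of_nonneg volume (fun p => m (s⁻¹ • p) * h p) s (hR := hs.le)
    simp only [smul_smul, inv_mul_cancel₀ hs.ne', one_smul] at this
    rw [this]
    simp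
  have h4 : HasDerivAt (fun s : ℝ => ((s : ℂ)^2)⁻¹ * f (s⁻¹ • ξ))
      (- 2 * f ξ - fderiv ℝ f ξ ξ) 1 := by
    have a1 : HasDerivAt (fun s : ℝ => (s : ℂ)) 1 1 := Complex.ofRealCLM.hasDerivAt
    have a2 := (a1.pow 2).inv (by simp)
    have a3 : HasDerivAt (fun s : ℝ => f (s • ξ)) (fderiv ℝ f ξ ξ) ((1 : ℝ)⁻¹) := by
      simpa using deriv_S f ξ 1 one_pos
    have a4 := HasDerivAt.scomp (1 : ℝ) a3 (hasDerivAt_inv one_ne_zero)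
    refine (a2.mul a4).congr_deriv ?_
    simp
    ring
  have h5 := h1.unique (h4.congr_of_eventuallyEq
    (Filter.eventually_of_mem (Ioi_mem_nhds one_pos) fun s hs => h3 s hs))
  have h6 : ft2 (S0 h) ξ = ∫ p, m p * fderiv ℝ h p p := by
    simp only [ft2, S0_eq, m]
  rw [h6, h5]; ring

theorem dec_prod {f g : ℝ × ℝ → ℂ} (hf : Dec f) (hg : Dec g) :
    Dec (fun p : (ℝ × ℝ) × (ℝ × ℝ) => f (p.1 - p.2) * g p.2) := by
  intro N
  obtain ⟨K, hK⟩ := hf N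
  obtain ⟨L, hL⟩ := hg N
  refine ⟨K * L, fun p => ?_⟩
  have hK0 : 0 ≤ K := le_trans (by positivity) (hK 0)
  have h1 : 1 + ‖p‖ ≤ (1 + ‖p.1 - p.2‖) * (1 + ‖p.2‖) := by
    have : ‖p‖ ≤ ‖p.1 - p.2‖ + ‖p.2‖ := by
      rw [Prod.norm_def]
      refine max_le ?_ (by linarith [norm_nonneg (p.1 - p.2)])
      simpa using norm_add_le (p.1 - p.2) p.2
    nlinarith [norm_nonneg (p.1 - p.2), norm_nonneg p.2]
  calc ‖f (p.1 - p.2) * g p.2‖ * (1 + ‖p‖) ^ N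
      ≤ ‖f (p.1 - p.2) * g p.2‖ * ((1 + ‖p.1 - p.2‖) * (1 + ‖p.2‖)) ^ N := by gcongr
    _ = (‖f (p.1 - p.2)‖ * (1 + ‖p.1 - p.2‖) ^ N) * (‖g p.2‖ * (1 + ‖p.2‖) ^ N) := by
        rw [norm_mul, mul_pow]; ring
    _ ≤ _ := by gcongr; exacts [hK _, hL _]

theorem dec_add {E : Type*} [NormedAddCommGroup E] {f g : E → ℂ} (hf : Dec f) (hg : Dec g) :
    Dec (fun p => f p + g p) := by
  intro N
  obtain ⟨K, hK⟩ := hf N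
  obtain ⟨L, hL⟩ := hg N
  refine ⟨K + L, fun p => ?_⟩
  calc ‖f p + g p‖ * (1 + ‖p‖) ^ N ≤ (‖f p‖ + ‖g p‖) * (1 + ‖p‖) ^ N := by
        gcongr; exact norm_add_le _ _
    _ = ‖f p‖ * (1 + ‖p‖) ^ N + ‖g p‖ * (1 + ‖p‖) ^ N := by ring
    _ ≤ _ := add_le_add (hK p) (hL p)

theorem dec_cmul {E : Type*} [NormedAddCommGroup E] {f : E → ℂ} (a : ℂ) (hf : Dec f) :
    Dec (fun p => a * f p) := by
  intro N
  obtain ⟨K, hK⟩ := hf N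
  refine ⟨‖a‖ * K, fun p => ?_⟩
  rw [norm_mul, mul_assoc]
  gcongr
  exact hK p

theorem q_bound (c : ℕ) (q : ℝ × ℝ → ℝ × ℝ → ℂ)
    (hq : Continuous (fun p : (ℝ × ℝ) × (ℝ × ℝ) => q p.1 p.2))
    (hom : ∀ t : ℝ, 0 < t → ∀ ξ η : ℝ × ℝ, q (t • ξ) (t • η) = (t : ℂ) ^ c * q ξ η) :
    ∃ M : ℝ, ∀ p : (ℝ × ℝ) × (ℝ × ℝ), ‖q p.1 p.2‖ ≤ M * (1 + ‖p‖) ^ c := by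
  obtain ⟨M, hM⟩ := (isCompact_closedBall (0 : (ℝ × ℝ) × (ℝ × ℝ)) 1).exists_bound_of_continuousOn
    hq.continuousOn
  refine ⟨M, fun p => ?_⟩
  have ht : 0 < 1 + ‖p‖ := by positivity
  have h1 := hM ((1 + ‖p‖)⁻¹ • p) (by
    rw [mem_closedBall_zero_iff, norm_smul, norm_inv, Real.norm_of_nonneg ht.le,
      inv_mul_le_iff₀ ht]; linarith)
  have h2 := hom (1 + ‖p‖) ht ((1 + ‖p‖)⁻¹ • p).1 ((1 + ‖p‖)⁻¹ • p).2
  simp only [Prod.smul_fst, Prod.smul_snd, smul_inv_smul₀ ht.ne'] at h1 h2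
  rw [h2, norm_mul, norm_pow, Complex.norm_real, Real.norm_of_nonneg ht.le, mul_comm]
  gcongr

instance haar4 : (volume : Measure ((ℝ × ℝ) × (ℝ × ℝ))).IsAddHaarMeasure := by
  rw [Measure.volume_eq_prod (ℝ × ℝ) (ℝ × ℝ)]
  infer_instance

/-- phase times symbol -/
noncomputable def mq (q : ℝ × ℝ → ℝ × ℝ → ℂ) (x : ℝ × ℝ) (p : (ℝ × ℝ) × (ℝ × ℝ)) : ℂ :=
  Complex.exp (Complex.I * (x.1 * p.1.1 + x.2 * p.1.2)) * q p.1 p.2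

theorem Qop_eq (q : ℝ × ℝ → ℝ × ℝ → ℂ) (h₁ h₂ f g : ℝ × ℝ → ℂ) (x : ℝ × ℝ)
    (hf : ∀ ξ, ft2 h₁ ξ = f ξ) (hg : ∀ ξ, ft2 h₂ ξ = g ξ)
    (hi : Integrable (fun p : (ℝ × ℝ) × (ℝ × ℝ) => mq q x p * (f (p.1 - p.2) * g p.2))) :
    Qop q h₁ h₂ x = (((2 * Real.pi) ^ 2 : ℝ) : ℂ)⁻¹ *
      ∫ p : (ℝ × ℝ) × (ℝ × ℝ), mq q x p * (f (p.1 - p.2) * g p.2) := by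
  rw [Qop, Measure.volume_eq_prod (ℝ × ℝ) (ℝ × ℝ), integral_prod _ hi]
  congr 1
  refine integral_congr_ae (Filter.Eventually.of_forall fun ξ => ?_)
  simp only
  rw [← integral_const_mul]
  refine integral_congr_ae (Filter.Eventually.of_forall fun η => ?_)
  simp only [mq, hf, hg]
  ring

theorem diff_aux (k : (ℝ × ℝ) × (ℝ × ℝ) → ℂ) (hk : Continuous k) (hi : Integrable k)
    (hi' : Integrable (fun p => (((1 + ‖p‖ : ℝ) : ℂ)) * k p)) (x : ℝ × ℝ) :
    DifferentiableAt ℝ (fun x : ℝ × ℝ => ∫ p : (ℝ × ℝ) × (ℝ × ℝ),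
      Complex.exp (Complex.I * (x.1 * p.1.1 + x.2 * p.1.2)) * k p) x := by
  let L : (ℝ × ℝ) × (ℝ × ℝ) → (ℝ × ℝ) →L[ℝ] ℂ := fun p =>
    (Complex.I * p.1.1) • (Complex.ofRealCLM.comp (ContinuousLinearMap.fst ℝ ℝ ℝ)) +
    (Complex.I * p.1.2) • (Complex.ofRealCLM.comp (ContinuousLinearMap.snd ℝ ℝ ℝ))
  have hLc : Continuous L := by fun_prop
  have hL : ∀ p, ‖L p‖ ≤ 2 * (1 + ‖p‖) := fun p => by
    refine ContinuousLinearMap.opNorm_le_bound _ (by positivity) fun y => ?_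
    have e : L p y = Complex.I * p.1.1 * y.1 + Complex.I * p.1.2 * y.2 := by simp [L]
    rw [e]
    refine (norm_add_le _ _).trans ?_
    simp only [norm_mul, Complex.norm_I, one_mul, Complex.norm_real]
    have a1 : ‖p.1.1‖ ≤ 1 + ‖p‖ := by linarith [norm_fst_le p.1, norm_fst_le p]
    have a2 : ‖p.1.2‖ ≤ 1 + ‖p‖ := by linarith [norm_snd_le p.1, norm_fst_le p]
    have b1 := norm_fst_le y
    have b2 := norm_snd_le y
    calc ‖p.1.1‖ * ‖y.1‖ + ‖p.1.2‖ * ‖y.2‖ ≤ (1 + ‖p‖) * ‖y‖ + (1 + ‖p‖) * ‖y‖ := by gcongr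
      _ = _ := by ring
  have hn : ∀ (x : ℝ × ℝ) (p : (ℝ × ℝ) × (ℝ × ℝ)),
      ‖Complex.exp (Complex.I * (x.1 * p.1.1 + x.2 * p.1.2))‖ = 1 := fun x p => by
    simp [Complex.norm_exp]
  have key := hasFDerivAt_integral_of_dominated_of_fderiv_le (𝕜 := ℝ) (μ := volume) (x₀ := x)
    (s := Set.univ)
    (F := fun (x : ℝ × ℝ) (p : (ℝ × ℝ) × (ℝ × ℝ)) =>
      Complex.exp (Complex.I * (x.1 * p.1.1 + x.2 * p.1.2)) * k p)
    (F' := fun x p => (k p * Complex.exp (Complex.I * (x.1 * p.1.1 + x.2 * p.1.2))) • L p)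
    (bound := fun p => 2 * ‖((1 + ‖p‖ : ℝ) : ℂ) * k p‖)
    Filter.univ_mem (Filter.Eventually.of_forall fun s => by fun_prop)
    ?_ (by fun_prop) (Filter.Eventually.of_forall fun p y _ => ?_) (hi'.norm.const_mul 2)
    (Filter.Eventually.of_forall fun p y _ => ?_)
  · exact key.differentiableAt
  · refine hi.norm.mono' (by fun_prop) (Filter.Eventually.of_forall fun p => ?_)
    rw [norm_mul, hn, one_mul]
  · rw [norm_smul, norm_mul, hn, mul_one, norm_mul, Complex.norm_real,
      Real.norm_of_nonneg (by positivity)]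
    calc ‖k p‖ * ‖L p‖ ≤ ‖k p‖ * (2 * (1 + ‖p‖)) := by gcongr; exact hL p
      _ = _ := by ring
  · have a : HasFDerivAt (fun x : ℝ × ℝ => Complex.I * (x.1 * p.1.1 + x.2 * p.1.2)) (L p) y := by
      refine (L p).hasFDerivAt.congr_of_eventuallyEq (Filter.Eventually.of_forall fun z => ?_)
      simp [L]; ring
    refine (a.cexp.mul_const (k p)).congr_fderiv ?_
    ext <;> simp <;> ring

/-- if the symbol `q` is homogeneous of degree `c`, then
`S₀ Q(h₁,h₂) = Q(S₀h₁,h₂) + Q(h₁,S₀h₂) − c·Q(h₁,h₂)` for Schwartz `h₁,h₂`. -/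
theorem stmt5 (c : ℕ) (q : ℝ × ℝ → ℝ × ℝ → ℂ)
    (hq : ContDiff ℝ (⊤ : ℕ∞) (fun p : (ℝ × ℝ) × (ℝ × ℝ) => q p.1 p.2))
    (hom : ∀ t : ℝ, 0 < t → ∀ ξ η : ℝ × ℝ, q (t • ξ) (t • η) = (t : ℂ) ^ c * q ξ η)
    (h₁ h₂ : SchwartzMap (ℝ × ℝ) ℂ) :
    ∀ x, S0 (Qop q (⇑h₁) (⇑h₂)) x =
      Qop q (S0 (⇑h₁)) (⇑h₂) x + Qop q (⇑h₁) (S0 (⇑h₂)) x - (c : ℂ) * Qop q (⇑h₁) (⇑h₂) x := by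
  intro x
  have hqc := hq.continuous
  obtain ⟨M, hM⟩ := q_bound c q hqc hom
  obtain ⟨f, hf⟩ := ft2_schwartz h₁
  obtain ⟨g, hg⟩ := ft2_schwartz h₂
  have hmc : ∀ x, Continuous (mq q x) := fun x => by unfold mq; fun_prop
  have hmM : ∀ x p, ‖mq q x p‖ ≤ M * (1 + ‖p‖) ^ c := fun x p => by
    refine le_trans (le_of_eq ?_) (hM p)
    simp [mq, Complex.norm_exp]
  have hfc := f.continuous
  have hgc := g.continuous
  have hEfc := cont_ES f
  have hEgc := cont_ES g
  set Ef : ℝ × ℝ → ℂ := fun p => fderiv ℝ f p p with hEf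
  set Eg : ℝ × ℝ → ℂ := fun p => fderiv ℝ g p p with hEg
  let Ψ : (ℝ × ℝ) × (ℝ × ℝ) → ℂ := fun p => f (p.1 - p.2) * g p.2
  let Φ₁ : (ℝ × ℝ) × (ℝ × ℝ) → ℂ := fun p => Ef (p.1 - p.2) * g p.2
  let Φ₂ : (ℝ × ℝ) × (ℝ × ℝ) → ℂ := fun p => f (p.1 - p.2) * Eg p.2
  have hΨ : Dec Ψ := dec_prod (dec_S f) (dec_S g)
  have hΦ₁ : Dec Φ₁ := dec_prod (dec_ES f) (dec_S g)
  have hΦ₂ : Dec Φ₂ := dec_prod (dec_S f) (dec_ES g)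
  have hΨc : Continuous Ψ := by fun_prop
  have hΦ₁c : Continuous Φ₁ := by fun_prop
  have hΦ₂c : Continuous Φ₂ := by fun_prop
  have iΨ : ∀ x, Integrable (fun p => mq q x p * Ψ p) := fun x =>
    int_aux volume (hmc x) (hmM x) hΨc hΨ
  have iΦ₁ := int_aux volume (hmc x) (hmM x) hΦ₁c hΦ₁
  have iΦ₂ := int_aux volume (hmc x) (hmM x) hΦ₂c hΦ₂
  set C : ℂ := (((2 * Real.pi) ^ 2 : ℝ) : ℂ)⁻¹ with hC
  have Q0 : ∀ x, Qop q h₁ h₂ x = C * ∫ p, mq q x p * Ψ p := fun x =>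
    Qop_eq q h₁ h₂ f g x hf hg (iΨ x)
  have e1 : ∀ p, mq q x p * ((- Ef (p.1 - p.2) - 2 * f (p.1 - p.2)) * g p.2) =
      - (mq q x p * Φ₁ p) - 2 * (mq q x p * Ψ p) := fun p => by simp only [Φ₁, Ψ]; ring
  have e2 : ∀ p, mq q x p * (f (p.1 - p.2) * (- Eg p.2 - 2 * g p.2)) =
      - (mq q x p * Φ₂ p) - 2 * (mq q x p * Ψ p) := fun p => by simp only [Φ₂, Ψ]; ring
  have Q1 : Qop q (S0 h₁) h₂ x = C * (-(∫ p, mq q x p * Φ₁ p) - 2 * ∫ p, mq q x p * Ψ p) := by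
    rw [Qop_eq q (S0 h₁) h₂ (fun ξ => - Ef ξ - 2 * f ξ) g x (ft2_S0 h₁ f hf) hg]
    · simp only [e1]
      rw [integral_sub iΦ₁.fun_neg ((iΨ x).const_mul 2), integral_neg, integral_const_mul]
    · simp only [e1]
      exact iΦ₁.fun_neg.sub ((iΨ x).const_mul 2)
  have Q2 : Qop q h₁ (S0 h₂) x = C * (-(∫ p, mq q x p * Φ₂ p) - 2 * ∫ p, mq q x p * Ψ p) := by
    rw [Qop_eq q h₁ (S0 h₂) f (fun ξ => - Eg ξ - 2 * g ξ) x hf (ft2_S0 h₂ g hg)]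
    · simp only [e2]
      rw [integral_sub iΦ₂.fun_neg ((iΨ x).const_mul 2), integral_neg, integral_const_mul]
    · simp only [e2]
      exact iΦ₂.fun_neg.sub ((iΨ x).const_mul 2)
  -- differentiability
  have hQd : DifferentiableAt ℝ (Qop q h₁ h₂) x := by
    have e : Qop q h₁ h₂ = fun x => C * ∫ p : (ℝ × ℝ) × (ℝ × ℝ),
        Complex.exp (Complex.I * (x.1 * p.1.1 + x.2 * p.1.2)) * (q p.1 p.2 * Ψ p) := by
      ext y; rw [Q0]; simp only [mq, mul_assoc]
    rw [e]
    refine (diff_aux _ (by fun_prop) (int_aux volume hqc hM hΨc hΨ) ?_ x).const_mul C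
    have := int_aux (m := fun p => ((1 + ‖p‖ : ℝ) : ℂ) * q p.1 p.2) (M := M) (c := c + 1)
      volume (by fun_prop) (fun p => ?_) hΨc hΨ
    · simpa only [mul_assoc] using this
    · rw [norm_mul, Complex.norm_real, Real.norm_of_nonneg (by positivity)]
      calc (1 + ‖p‖) * ‖q p.1 p.2‖ ≤ (1 + ‖p‖) * (M * (1 + ‖p‖) ^ c) := by gcongr; exact hM p
        _ = _ := by ring
  -- scaling derivative
  have hsc := scal volume (hmc x) (hmM x) hΨc hΨ (Φ := fun p => Φ₁ p + Φ₂ p) (by fun_prop) (dec_add hΦ₁ hΦ₂)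
    (fun p s hs => by
      have a := (deriv_S f (p.1 - p.2) s hs).mul (deriv_S g p.2 s hs)
      have e : (fun s : ℝ => Ψ (s • p)) =
          (fun s : ℝ => f (s • (p.1 - p.2))) * (fun s : ℝ => g (s • p.2)) := by
        ext s; simp [Ψ, smul_sub]
      rw [e]
      refine a.congr_deriv ?_
      simp only [Φ₁, Φ₂, Ef, Eg, Prod.smul_fst, Prod.smul_snd, ← smul_sub]
      ring)
  have h3 : ∀ s : ℝ, 0 < s → C * ∫ p, mq q x p * Ψ (s • p) =
      ((s : ℂ) ^ (c + 4))⁻¹ * Qop q h₁ h₂ (s⁻¹ • x) := fun s hs => by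
    have hs0 : (s : ℂ) ≠ 0 := by exact_mod_cast hs.ne'
    rw [Q0]
    have := Measure.integral_comp_smul_of_nonneg volume
      (fun p : (ℝ × ℝ) × (ℝ × ℝ) => mq q (s⁻¹ • x) p * Ψ p) s (hR := hs.le)
    have e : ∀ p, mq q (s⁻¹ • x) (s • p) = (s : ℂ) ^ c * mq q x p := fun p => by
      simp only [mq, Prod.smul_fst, Prod.smul_snd, hom s hs, smul_eq_mul]
      have : Complex.I * (((s⁻¹ * x.1 : ℝ) : ℂ) * ((s * p.1.1 : ℝ) : ℂ) +
          ((s⁻¹ * x.2 : ℝ) : ℂ) * ((s * p.1.2 : ℝ) : ℂ)) =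
          Complex.I * (x.1 * p.1.1 + x.2 * p.1.2) := by
        push_cast; field_simp
      rw [this]; ring
    simp only [e, mul_assoc] at this
    rw [integral_const_mul] at this
    have fr : finrank ℝ ((ℝ × ℝ) × (ℝ × ℝ)) = 4 := by simp
    rw [fr, Complex.real_smul] at this
    push_cast at this
    rw [pow_add, mul_inv]
    have t : ∫ p, mq q x p * Ψ (s • p) =
        ((s : ℂ) ^ c)⁻¹ * (((s : ℂ) ^ 4)⁻¹ * ∫ p, mq q (s⁻¹ • x) p * Ψ p) := by
      rw [← this]; field_simp
    rw [t]; ring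
  have h4 : HasDerivAt (fun s : ℝ => ((s : ℂ)^(c + 4))⁻¹ * Qop q h₁ h₂ (s⁻¹ • x))
      (- (c + 4) * Qop q h₁ h₂ x - fderiv ℝ (Qop q h₁ h₂) x x) 1 := by
    have a1 : HasDerivAt (fun s : ℝ => (s : ℂ)) 1 1 := Complex.ofRealCLM.hasDerivAt
    have a2 := (a1.pow (c + 4)).inv (by simp)
    have a3 : HasDerivAt (fun s : ℝ => Qop q h₁ h₂ (s • x)) (fderiv ℝ (Qop q h₁ h₂) x x)
        ((1 : ℝ)⁻¹) := by
      have b1 : HasDerivAt (fun s : ℝ => s • x) x (1 : ℝ)⁻¹ := by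
        simpa using (hasDerivAt_id (1 : ℝ)⁻¹).smul_const x
      have b2 : HasFDerivAt (Qop q h₁ h₂) (fderiv ℝ (Qop q h₁ h₂) x) ((1 : ℝ)⁻¹ • x) := by
        simpa using hQd.hasFDerivAt
      exact HasFDerivAt.comp_hasDerivAt (1 : ℝ)⁻¹ (f := fun s : ℝ => s • x) b2 b1
    have a4 := HasDerivAt.scomp (1 : ℝ) a3 (hasDerivAt_inv one_ne_zero)
    refine (a2.mul a4).congr_deriv ?_
    simp
    ring
  have h5 := (hsc.const_mul C).unique (h4.congr_of_eventuallyEq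
    (Filter.eventually_of_mem (Ioi_mem_nhds one_pos) fun s hs => h3 s hs))
  simp only [mul_add] at h5
  rw [integral_add iΦ₁ iΦ₂] at h5
  rw [S0_eq, Q1, Q2]
  have h6 := Q0 x
  linear_combination h5 - 4 * h6
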